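/- Over all 4×4 Unit Rush Hour configurations with exactly one empty cell, any choice of exit row r containing at least one horizontal car (with target the leftmost horizontal car on row r), that are solvable, the maximum of the minimal number of legal moves needed to reach a solved configuration is exactly 40. -/

import Mathlib

/-- A cell of an `m × n` grid, indexed (row, column), column 0 leftmost. -/
abbrev Cell (m n : ℕ) := Fin m × Fin n

/-- `u` and `v` are horizontally adjacent. -/
def hAdj {m n : ℕ} (u v : Cell m n) : Prop :=
  u.1 = v.1 ∧ (u.2.val + 1 = v.2.val ∨ v.2.val + 1 = u.2.val)

/-- `u` and `v` are vertically adjacent. -/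
def vAdj {m n : ℕ} (u v : Cell m n) : Prop :=
  u.2 = v.2 ∧ (u.1.val + 1 = v.1.val ∨ v.1.val + 1 = u.1.val)

/-- A Unit Rush Hour configuration on an `m × n` grid with `k` (labeled) cars:
each car `i` has an orientation `ori i` (`true` = horizontal, `false` =
vertical) and a position `pos i`; distinct cars occupy distinct cells.
Cells outside the range of `pos` are empty. -/
structure RHConfig (m n k : ℕ) where
  ori : Fin k → Bool
  pos : Fin k → Cell m n
  inj : Function.Injective pos

/-- A legal move: one car `i` slides one cell into an adjacent empty cell —
horizontally if it is a horizontal car, vertically if it is a vertical car —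
while all other cars (and all orientations) stay put. -/
def RHMove {m n k : ℕ} (c c' : RHConfig m n k) : Prop :=
  c'.ori = c.ori ∧
  ∃ i : Fin k,
    (∀ j, j ≠ i → c'.pos j = c.pos j) ∧
    (∀ j, c.pos j ≠ c'.pos i) ∧
    ((c.ori i = true ∧ hAdj (c.pos i) (c'.pos i)) ∨
     (c.ori i = false ∧ vAdj (c.pos i) (c'.pos i)))

namespace RH

/-- Evaluate `x` to a literal (in the kernel) before passing it on. -/
def force {α : Type} (x : Nat) (k : Nat → α) : α :=
  Nat.rec (motive := fun _ => α) (k 0) (fun n _ => k (n + 1)) x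

theorem force_eq {α : Type} (x : Nat) (k : Nat → α) : force x k = k x := by
  cases x <;> rfl

/-- Bitset of the numbers below `2 ^ k` whose bits satisfy the constraints `c`. -/
def cube (c : Nat → Option Bool) : Nat → Nat
  | 0 => 1
  | k + 1 => match c k with
    | none => force (cube c k) fun x => x ||| (x <<< 2 ^ k)
    | some false => cube c k
    | some true => (cube c k) <<< 2 ^ k

/-- Constraint: the bit at the hole `p` is clear, and the bit at `q` is `h`. -/
def cons (p q : Nat) (h : Bool) (i : Nat) : Option Bool :=
  match Nat.beq i p with
  | true => some false
  | false => match Nat.beq i q with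
    | true => some h
    | false => none

abbrev Mv := Nat × Nat × Bool

/-- Preimage of the set `x` under the move of the hole from `p` to `q`. -/
def pre (x : Nat) (m : Mv) (mask : Nat) : Nat :=
  match m.2.2 with
  | false => x &&& mask
  | true => match Nat.ble m.1 m.2.1 with
    | true => (x <<< (2 ^ m.2.1 - 2 ^ m.1)) &&& mask
    | false => (x >>> (2 ^ m.1 - 2 ^ m.2.1)) &&& mask

def maskOf (m : Mv) : Nat := cube (cons m.1 m.2.1 m.2.2) 16

def withMasks {α : Type} : List Mv → (List (Mv × Nat) → α) → α
  | [], k => k []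
  | m :: ms, k => force (maskOf m) fun y => withMasks ms fun l => k ((m, y) :: l)

theorem withMasks_eq {α : Type} (ms : List Mv) (k : List (Mv × Nat) → α) :
    withMasks ms k = k (ms.map fun m => (m, maskOf m)) := by
  induction ms generalizing k with
  | nil => rfl
  | cons m ms ih => simp [withMasks, force_eq, ih]

def okMove (m : Nat × Nat × Bool) : Bool :=
  match m.2.2 with
  | true => Nat.beq (m.1 / 4) (m.2.1 / 4) &&
      (Nat.beq (m.1 % 4 + 1) (m.2.1 % 4) || Nat.beq (m.2.1 % 4 + 1) (m.1 % 4))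
  | false => Nat.beq (m.1 % 4) (m.2.1 % 4) &&
      (Nat.beq (m.1 / 4 + 1) (m.2.1 / 4) || Nat.beq (m.2.1 / 4 + 1) (m.1 / 4))

/-- The possible moves of a hole at `p`. -/
def movesAt (p : Nat) : List Mv :=
  ((List.range 16).flatMap fun q => [(p, q, true), (p, q, false)]).filter okMove

def withRows {α : Type} : List Nat → (List (List (Mv × Nat)) → α) → α
  | [], k => k []
  | p :: ps, k => withMasks (movesAt p) fun y => withRows ps fun l => k (y :: l)

theorem withRows_eq {α : Type} (ps : List Nat) (k : List (List (Mv × Nat)) → α) :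
    withRows ps k = k (ps.map fun p => (movesAt p).map fun m => (m, maskOf m)) := by
  induction ps generalizing k with
  | nil => rfl
  | cons m ms ih => simp [withRows, withMasks_eq, ih]

def mapF {α : Type} (f : Nat → Nat) : List Nat → (List Nat → α) → α
  | [], k => k []
  | p :: ps, k => force (f p) fun y => mapF f ps fun l => k (y :: l)

theorem mapF_eq {α : Type} (f : Nat → Nat) (ps : List Nat) (k : List Nat → α) :
    mapF f ps k = k (ps.map f) := by
  induction ps generalizing k with
  | nil => rfl
  | cons m ms ih => simp [mapF, force_eq, ih]

/-- One step of the search, for the states with hole `p`. -/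
def stepAt (ms : List (List (Mv × Nat))) (xs : List Nat) (p : Nat) : Nat :=
  (ms.getD p []).foldr (fun m y => y ||| pre (xs.getD m.1.2.1 0) m.1 m.2) (xs.getD p 0)

def start (r : Nat) : Nat :=
  cube (fun i => match Nat.beq i (4 * r) with
    | true => some true
    | false => none) 16

def runK {α : Type} (ms : List (List (Mv × Nat))) (k : List Nat → α) : Nat → List Nat → α
  | 0, xs => k xs
  | n + 1, xs => mapF (stepAt ms xs) (List.range 16) fun ys => runK ms k n ys

def layerK {α : Type} (ms : List (List (Mv × Nat))) (r n : Nat) (k : List Nat → α) : α :=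
  mapF (fun _ => start r) (List.range 16) fun xs => runK ms k n xs

theorem runK_eq {α : Type} (ms : List (List (Mv × Nat))) (k : List Nat → α) (n : Nat)
    (xs : List Nat) :
    runK ms k n xs = k ((fun xs => (List.range 16).map (stepAt ms xs))^[n] xs) := by
  induction n generalizing xs with
  | zero => rfl
  | succ n ih => simp only [runK, mapF_eq, ih, Function.iterate_succ_apply]

/-- The bitsets (one for each hole) of the states that are solved in at most `n` moves. -/
def layer (ms : List (List (Mv × Nat))) (r : Nat) : Nat → List Nat
  | 0 => (List.range 16).map fun _ => start r
  | n + 1 => (List.range 16).map (stepAt ms (layer ms r n))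

theorem layerK_eq {α : Type} (ms : List (List (Mv × Nat))) (r n : Nat) (k : List Nat → α) :
    layerK ms r n k = k (layer ms r n) := by
  rw [layerK, mapF_eq, runK_eq]
  congr 1
  induction n with
  | zero => rfl
  | succ n ih => rw [Function.iterate_succ_apply', ih, layer]

def mm : List (List (Mv × Nat)) :=
  (List.range 16).map fun p => (movesAt p).map fun m => (m, maskOf m)

def eqs : List Nat → List Nat → Bool
  | [], [] => true
  | x :: xs, y :: ys => match Nat.beq x y with
    | true => eqs xs ys
    | false => false
  | _, _ => false

theorem eq_of_eqs (xs ys : List Nat) (h : eqs xs ys = true) : xs = ys := by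
  induction xs generalizing ys with
  | nil => cases ys with
    | nil => rfl
    | cons y ys => simp [eqs] at h
  | cons x xs ih => cases ys with
    | nil => simp [eqs] at h
    | cons y ys =>
      cases hb : Nat.beq x y with
      | false => simp [eqs, hb] at h
      | true =>
        simp only [eqs, hb] at h
        rw [Nat.eq_of_beq_eq_true hb, ih ys h]

/-- The search for row `r` has stabilized after 40 steps. -/
def stops (r : Nat) : Bool :=
  withRows (List.range 16) fun ms => layerK ms r 40 fun xs =>
    mapF (stepAt ms xs) (List.range 16) fun ys => eqs ys xs

def hardIn (n : Nat) : Bool :=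
  withRows (List.range 16) fun ms => layerK ms 1 n fun xs => Nat.testBit (xs.getD 10 0) 49447

theorem stops0 : stops 0 = true := by decide +kernel
theorem stops1 : stops 1 = true := by decide +kernel
theorem stops2 : stops 2 = true := by decide +kernel
theorem stops3 : stops 3 = true := by decide +kernel
theorem hardIn39 : hardIn 39 = false := by decide +kernel
theorem hardIn40 : hardIn 40 = true := by decide +kernel

theorem stop_of (r : Nat) (h : stops r = true) : layer mm r (40 + 1) = layer mm r 40 := by
  rw [stops, withRows_eq, layerK_eq, mapF_eq] at h
  rw [layer]
  exact eq_of_eqs _ _ h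

theorem layer_stop (r : Nat) (hr : r < 4) : layer mm r (40 + 1) = layer mm r 40 := by
  match r, hr with
  | 0, _ => exact stop_of 0 stops0
  | 1, _ => exact stop_of 1 stops1
  | 2, _ => exact stop_of 2 stops2
  | 3, _ => exact stop_of 3 stops3

theorem hardIn_eq (n : Nat) : hardIn n = Nat.testBit ((layer mm 1 n).getD 10 0) 49447 := by
  rw [hardIn, withRows_eq, layerK_eq]
  rfl

theorem far : Nat.testBit ((layer mm 1 39).getD 10 0) 49447 = false := by
  rw [← hardIn_eq]
  exact hardIn39

theorem near : Nat.testBit ((layer mm 1 40).getD 10 0) 49447 = true := by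
  rw [← hardIn_eq]
  exact hardIn40

theorem beq_f {a b : Nat} (h : a ≠ b) : Nat.beq a b = false := by
  rw [← Bool.not_eq_true, Nat.beq_eq]
  exact h

theorem ble_f {a b : Nat} (h : b < a) : Nat.ble a b = false := by
  rw [← Bool.not_eq_true, Nat.ble_eq]
  omega

theorem ble_t {a b : Nat} (h : a ≤ b) : Nat.ble a b = true := by
  rw [Nat.ble_eq]
  exact h

theorem pow_mono {a b : Nat} (h : a ≤ b) : 2 ^ a ≤ 2 ^ b :=
  Nat.pow_le_pow_right (by norm_num) h

theorem cube_spec (c : Nat → Option Bool) (k g : Nat) :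
    Nat.testBit (cube c k) g = true ↔
      g < 2 ^ k ∧ ∀ i < k, ∀ b, c i = some b → g.testBit i = b := by
  induction k generalizing g with
  | zero =>
    simp [cube, Nat.testBit_one_eq_true_iff_self_eq_zero]
  | succ k ih =>
    have hp : 2 ^ (k + 1) = 2 ^ k + 2 ^ k := by ring
    have hlow : g < 2 ^ k → g.testBit k = false := fun h => Nat.testBit_lt_two_pow h
    have hhigh : 2 ^ k ≤ g → g < 2 ^ (k + 1) → g.testBit k = true ∧
        ∀ i < k, (g - 2 ^ k).testBit i = g.testBit i := by
      intro h1 h2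
      obtain ⟨e, rfl⟩ := Nat.exists_eq_add_of_le h1
      refine ⟨?_, ?_⟩
      · rw [Nat.testBit_two_pow_add_eq, Nat.testBit_lt_two_pow (by omega)]; rfl
      · intro i hi
        rw [Nat.testBit_two_pow_add_gt hi, Nat.add_sub_cancel_left]
    have split : (∀ i < k + 1, ∀ b, c i = some b → g.testBit i = b) ↔
        (∀ i < k, ∀ b, c i = some b → g.testBit i = b) ∧
          (∀ b, c k = some b → g.testBit k = b) := by
      constructor
      · intro h
        exact ⟨fun i hi => h i (by omega), h k (by omega)⟩
      · rintro ⟨h1, h2⟩ i hi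
        rcases Nat.lt_succ_iff_lt_or_eq.mp hi with h | rfl
        · exact h1 i h
        · exact h2
    have hsh : Nat.testBit (cube c k <<< 2 ^ k) g = true ↔
        (2 ^ k ≤ g ∧ g < 2 ^ (k + 1) ∧ ∀ i < k, ∀ b, c i = some b → g.testBit i = b) := by
      rw [Nat.testBit_shiftLeft, Bool.and_eq_true, decide_eq_true_iff, ih]
      constructor
      · rintro ⟨h1, h2, h3⟩
        have h4 : g < 2 ^ (k + 1) := by omega
        refine ⟨h1, h4, fun i hi b hb => ?_⟩
        rw [← (hhigh h1 h4).2 i hi]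
        exact h3 i hi b hb
      · rintro ⟨h1, h4, h3⟩
        refine ⟨h1, by omega, fun i hi b hb => ?_⟩
        rw [(hhigh h1 h4).2 i hi]
        exact h3 i hi b hb
    rw [split]
    cases hc : c k with
    | none =>
      simp only [cube, hc, force_eq, Nat.testBit_or, Bool.or_eq_true, hsh, ih]
      constructor
      · rintro (⟨h1, h2⟩ | ⟨h1, h2, h3⟩)
        · exact ⟨by omega, h2, by simp⟩
        · exact ⟨h2, h3, by simp⟩
      · rintro ⟨h1, h2, -⟩
        by_cases h : g < 2 ^ k
        · exact Or.inl ⟨h, h2⟩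
        · exact Or.inr ⟨by omega, h1, h2⟩
    | some b =>
      cases b with
      | false =>
        simp only [cube, hc, ih]
        constructor
        · rintro ⟨h1, h2⟩
          refine ⟨by omega, h2, ?_⟩
          rintro b hb
          cases hb
          exact hlow h1
        · rintro ⟨h1, h2, h3⟩
          refine ⟨?_, h2⟩
          by_contra h
          have := (hhigh (by omega) h1).1
          rw [h3 false rfl] at this
          cases this
      | true =>
        simp only [cube, hc, hsh]
        constructor
        · rintro ⟨h1, h2, h3⟩
          refine ⟨h2, h3, ?_⟩
          rintro b hb
          cases hb
          exact (hhigh h1 h2).1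
        · rintro ⟨h1, h2, h3⟩
          refine ⟨?_, h1, h2⟩
          by_contra h
          have := hlow (by omega)
          rw [h3 true rfl] at this
          cases this

theorem start_spec (r g : Nat) (hr : r < 4) (hg : g < 65536) :
    (start r).testBit g = true ↔ g.testBit (4 * r) = true := by
  rw [start, cube_spec]
  constructor
  · rintro ⟨-, h⟩
    exact h (4 * r) (by omega) true (by simp)
  · intro h
    refine ⟨hg, fun i hi b hb => ?_⟩
    by_cases hir : i = 4 * r
    · subst hir
      simp at hb
      subst hb
      exact h
    · have : Nat.beq i (4 * r) = false := beq_f hir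
      simp [this] at hb

theorem mask_spec (p q g : Nat) (h : Bool) (hp : p < 16) (hq : q < 16)
    (hg : g < 65536) (hpq : p ≠ q) (hgp : g.testBit p = false) :
    (maskOf (p, q, h)).testBit g = true ↔ g.testBit q = h := by
  rw [maskOf, cube_spec]
  simp only []
  constructor
  · rintro ⟨-, H⟩
    have hb2 : Nat.beq q p = false := beq_f (Ne.symm hpq)
    exact H q hq h (by simp [cons, hb2])
  · intro h2
    refine ⟨hg, fun i hi b hb => ?_⟩
    by_cases hip : i = p
    · subst hip
      simp [cons] at hb
      rw [hgp, hb]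
    · have hb2 : Nat.beq i p = false := beq_f hip
      by_cases hiq : i = q
      · subst hiq
        simp [cons, hb2] at hb
        rw [h2, hb]
      · have hb3 : Nat.beq i q = false := beq_f hiq
        simp [cons, hb2, hb3] at hb

/-- The grid after the hole moved from `p` to `q`, past a car of type `h`. -/
def newg (p q : Nat) (h : Bool) (g : Nat) : Nat := if h then g + 2 ^ p - 2 ^ q else g

theorem pre_spec (x p q g : Nat) (h : Bool) (hgq : g.testBit q = h) (k : Nat) :
    (pre x (p, q, h) k).testBit g = true ↔
      k.testBit g = true ∧ x.testBit (newg p q h g) = true := by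
  cases h with
  | false =>
    simp [pre, newg]
    tauto
  | true =>
    have hge := Nat.ge_two_pow_of_testBit hgq
    by_cases hlt : p ≤ q
    · have hb : Nat.ble p q = true := ble_t hlt
      have e3 : 2 ^ p ≤ 2 ^ q := pow_mono hlt
      have key : 2 ^ q - 2 ^ p ≤ g ∧ g - (2 ^ q - 2 ^ p) = newg p q true g := by
        simp only [newg, if_true]
        generalize 2 ^ p = P at *
        generalize 2 ^ q = Q at *
        omega
      simp only [pre, hb, Nat.testBit_and, Nat.testBit_shiftLeft, key.2, Bool.and_eq_true,
        ge_iff_le, key.1, decide_true, true_and]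
      tauto
    · have hb : Nat.ble p q = false := ble_f (by omega)
      have e3 : 2 ^ q ≤ 2 ^ p := pow_mono (by omega)
      have key : 2 ^ p - 2 ^ q + g = newg p q true g := by
        simp only [newg, if_true]
        generalize 2 ^ p = P at *
        generalize 2 ^ q = Q at *
        omega
      simp only [pre, hb, Nat.testBit_and, Nat.testBit_shiftRight, key, Bool.and_eq_true]
      tauto

theorem pre_mask (x k i : Nat) (m : Mv) (h : (pre x m k).testBit i = true) :
    k.testBit i = true := by
  unfold pre at h
  split at h
  · simp only [Nat.testBit_and, Bool.and_eq_true] at h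
    exact h.2
  · split at h <;> simp only [Nat.testBit_and, Bool.and_eq_true] at h <;> exact h.2

theorem mem_movesAt (p : Nat) (m : Mv) :
    m ∈ movesAt p ↔ m.1 = p ∧ m.2.1 < 16 ∧ okMove m = true := by
  obtain ⟨p', q, h⟩ := m
  simp only [movesAt, List.mem_filter, List.mem_flatMap, List.mem_range, List.mem_cons,
    Prod.mk.injEq, List.not_mem_nil, or_false]
  constructor
  · rintro ⟨⟨b, hb, h1 | h1⟩, h2⟩
    · obtain ⟨rfl, rfl, rfl⟩ := h1; exact ⟨rfl, hb, h2⟩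
    · obtain ⟨rfl, rfl, rfl⟩ := h1; exact ⟨rfl, hb, h2⟩
  · rintro ⟨rfl, h2, h3⟩
    refine ⟨⟨q, h2, ?_⟩, h3⟩
    cases h <;> simp

theorem okMove_ne (p q : Nat) (h : Bool) (hm : okMove (p, q, h) = true) : p ≠ q := by
  rintro rfl
  cases h <;> simp [okMove] at hm

theorem foldr_spec (ms : List (Mv × Nat)) (x : Mv → Nat) (y i : Nat) :
    (ms.foldr (fun m y => y ||| pre (x m.1) m.1 m.2) y).testBit i = true ↔
      y.testBit i = true ∨ ∃ m ∈ ms, (pre (x m.1) m.1 m.2).testBit i = true := by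
  induction ms with
  | nil => simp
  | cons m ms ih =>
    simp only [List.foldr_cons, Nat.testBit_or, Bool.or_eq_true, ih, List.mem_cons,
      exists_eq_or_imp]
    rw [or_assoc, or_comm (a := ∃ m ∈ ms, _)]

theorem mm_getD (p : Nat) (hp : p < 16) :
    mm.getD p [] = (movesAt p).map fun m => (m, maskOf m) := by
  simp [mm, List.getD_eq_getElem?_getD, hp]

theorem step_spec (xs : List Nat) (p g : Nat) (hp : p < 16) (hg : g < 65536)
    (hgp : g.testBit p = false) :
    (stepAt mm xs p).testBit g = true ↔
      (xs.getD p 0).testBit g = true ∨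
      ∃ q h, q < 16 ∧ okMove (p, q, h) = true ∧ g.testBit q = h ∧
        (xs.getD q 0).testBit (newg p q h g) = true := by
  rw [stepAt, foldr_spec _ (fun m => xs.getD m.2.1 0), mm_getD p hp]
  apply or_congr_right
  simp only [List.mem_map]
  constructor
  · rintro ⟨_, ⟨⟨p', q, h⟩, hm, rfl⟩, hx⟩
    obtain ⟨rfl, hq, hok⟩ := (mem_movesAt _ _).1 hm
    simp only at hq hok hx hp hgp
    have hne := okMove_ne _ _ _ hok
    have hgq := (mask_spec p' q g h hp hq hg hne hgp).1 (pre_mask _ _ _ _ hx)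
    rw [pre_spec _ p' q g h hgq] at hx
    exact ⟨q, h, hq, hok, hgq, hx.2⟩
  · rintro ⟨q, h, hq, hok, hgq, hx⟩
    have hne := okMove_ne _ _ _ hok
    refine ⟨_, ⟨(p, q, h), (mem_movesAt _ _).2 ⟨rfl, hq, hok⟩, rfl⟩, ?_⟩
    rw [pre_spec _ p q g h hgq]
    exact ⟨(mask_spec p q g h hp hq hg hne hgp).2 hgq, hx⟩

theorem testBit_add_pow (g p i : Nat) (h : g.testBit p = false) :
    (g + 2 ^ p).testBit i = if i = p then true else g.testBit i := by
  have hb : g % 2 ^ p < 2 ^ p := Nat.mod_lt _ (by positivity)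
  have e : g = 2 ^ p * (g / 2 ^ p) + g % 2 ^ p := (Nat.div_add_mod _ _).symm
  have hev : (g / 2 ^ p) % 2 = 0 := by
    rw [Nat.testBit_eq_decide_div_mod_eq] at h
    simp at h
    omega
  have e2 : g + 2 ^ p = 2 ^ p * (g / 2 ^ p + 1) + g % 2 ^ p := by
    rw [Nat.mul_add, mul_one]
    omega
  rw [e2, Nat.testBit_two_pow_mul_add _ hb]
  conv_rhs => rw [e, Nat.testBit_two_pow_mul_add _ hb]
  by_cases h1 : i < p
  · simp [h1, h1.ne]
  · rw [if_neg h1, if_neg h1]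
    by_cases h2 : i = p
    · subst h2
      simp [Nat.testBit_zero]
      omega
    · rw [if_neg h2]
      obtain ⟨j, hj⟩ : ∃ j, i - p = j + 1 := ⟨i - p - 1, by omega⟩
      rw [hj, Nat.testBit_succ, Nat.testBit_succ]
      congr 1
      omega

theorem testBit_newg (p q : Nat) (h : Bool) (g i : Nat) (hpq : p ≠ q)
    (hgp : g.testBit p = false) (hgq : g.testBit q = h) :
    (newg p q h g).testBit i =
      if i = p then h else if i = q then false else g.testBit i := by
  cases h with
  | false =>
    simp only [newg]
    split_ifs with h1 h2 <;> simp_all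
  | true =>
    have hx : ∀ j, (g ^^^ 2 ^ q).testBit j = if j = q then false else g.testBit j := by
      intro j
      rw [Nat.testBit_xor, Nat.testBit_two_pow]
      by_cases hj : j = q
      · subst hj; simp [hgq]
      · simp [hj, Ne.symm hj]
    have e : g = (g ^^^ 2 ^ q) + 2 ^ q := by
      apply Nat.eq_of_testBit_eq
      intro j
      rw [testBit_add_pow _ _ _ (by simp [hx]), hx]
      split_ifs with h1
      · rw [h1, hgq]
      · rfl
    have e2 : newg p q true g = (g ^^^ 2 ^ q) + 2 ^ p := by
      simp only [newg, if_true]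
      generalize g ^^^ 2 ^ q = G at *
      generalize 2 ^ p = P at *
      generalize 2 ^ q = Q at *
      omega
    rw [e2, testBit_add_pow _ _ _ (by simp [hx, hgp]), hx]

theorem newg_lt (p q : Nat) (h : Bool) (g : Nat) (hp : p < 16) (hpq : p ≠ q)
    (hg : g < 65536) (hgp : g.testBit p = false) (hgq : g.testBit q = h) :
    newg p q h g < 65536 := by
  apply Nat.lt_pow_two_of_testBit (n := 16)
  intro i hi
  rw [testBit_newg p q h g i hpq hgp hgq, if_neg (by omega)]
  split_ifs
  · rfl
  · exact Nat.testBit_lt_two_pow (lt_of_lt_of_le hg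
      (pow_mono (a := 16) hi))

abbrev Conf := RHConfig 4 4 15

def idx (u : Cell 4 4) : Nat := 4 * u.1.val + u.2.val

theorem idx_lt (u : Cell 4 4) : idx u < 16 := by
  have := u.1.2
  have := u.2.2
  unfold idx
  omega

theorem idx_inj {u v : Cell 4 4} (h : idx u = idx v) : u = v := by
  have := u.2.2
  have := v.2.2
  unfold idx at h
  ext <;> omega

theorem idx_surj (q : Nat) (hq : q < 16) : ∃ u, idx u = q :=
  ⟨(⟨q / 4, by omega⟩, ⟨q % 4, by omega⟩), by simp only [idx]; omega⟩

/-- Adjacency in the direction of a car of type `h`. -/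
def Adj (h : Bool) (u v : Cell 4 4) : Prop :=
  (h = true ∧ hAdj u v) ∨ (h = false ∧ vAdj u v)

theorem okMove_iff (h : Bool) (u v : Cell 4 4) :
    okMove (idx u, idx v, h) = true ↔ Adj h v u := by
  obtain ⟨a, b⟩ := u
  obtain ⟨c, d⟩ := v
  simp only [Adj, hAdj, vAdj]
  revert h a b c d
  decide +kernel

/-- `C` has its hole at `u`, and `g` encodes where the horizontal cars are. -/
structure Enc (C : Conf) (u : Cell 4 4) (g : Nat) : Prop where
  hole : ∀ j, C.pos j ≠ u
  lt : g < 65536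
  bit : ∀ v, g.testBit (idx v) = true ↔ ∃ j, C.pos j = v ∧ C.ori j = true

theorem Enc.bit_hole {C : Conf} {u : Cell 4 4} {g : Nat} (h : Enc C u g) :
    g.testBit (idx u) = false := by
  rw [← Bool.not_eq_true, h.bit]
  rintro ⟨j, hj, -⟩
  exact h.hole j hj

theorem occ {C : Conf} {u : Cell 4 4} (h : ∀ j, C.pos j ≠ u) (v : Cell 4 4) (hv : v ≠ u) :
    ∃ j, C.pos j = v := by
  by_contra hn
  push Not at hn
  have hsub : Finset.univ.image C.pos ⊆ (Finset.univ.erase u).erase v := by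
    intro w hw
    obtain ⟨j, -, rfl⟩ := Finset.mem_image.1 hw
    simp [h j, hn j]
  have hc := Finset.card_le_card hsub
  rw [Finset.card_image_of_injective _ C.inj, Finset.card_erase_of_mem (by simp [hv]),
    Finset.card_erase_of_mem (by simp)] at hc
  simp at hc

theorem exists_enc (C : Conf) : ∃ u g, Enc C u g := by
  classical
  have : ∃ u, ∀ j, C.pos j ≠ u := by
    by_contra hn
    push Not at hn
    have := Fintype.card_le_of_surjective C.pos hn
    simp at this
  obtain ⟨u, hu⟩ := this
  choose cell hcell using idx_surj
  have hci : ∀ v, cell (idx v) (idx_lt v) = v := fun v => idx_inj (hcell _ _)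
  refine ⟨u, Nat.ofBits (n := 16) fun i =>
    decide (∃ j, C.pos j = cell i.1 i.2 ∧ C.ori j = true), hu, ?_, ?_⟩
  · exact Nat.ofBits_lt_two_pow _
  · intro v
    rw [Nat.testBit_ofBits_lt _ _ (idx_lt v)]
    simp [hci]

/-- The car that was at `v` has moved to the hole `u`. -/
theorem enc_of_move {C C' : Conf} {u v : Cell 4 4} {g : Nat} {i : Fin 15}
    (h : Enc C u g) (hori : C'.ori = C.ori) (hv : C.pos i = v) (hu : C'.pos i = u)
    (hj : ∀ j, j ≠ i → C'.pos j = C.pos j) :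
    g.testBit (idx v) = C.ori i ∧ Enc C' v (newg (idx u) (idx v) (C.ori i) g) := by
  have hne : v ≠ u := hv ▸ h.hole i
  have hne' : idx u ≠ idx v := fun e => hne (idx_inj e).symm
  have hbit : g.testBit (idx v) = C.ori i := by
    rw [Bool.eq_iff_iff, h.bit]
    constructor
    · rintro ⟨j, hj, ho⟩
      rwa [C.inj (hj.trans hv.symm)] at ho
    · intro ho
      exact ⟨i, hv, ho⟩
  refine ⟨hbit, ?_, ?_, ?_⟩
  · intro j
    by_cases hji : j = i
    · subst hji; rw [hu]; exact hne.symm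
    · rw [hj j hji, ← hv]
      exact fun e => hji (C.inj e)
  · exact newg_lt _ _ _ _ (idx_lt u) hne' h.lt h.bit_hole hbit
  · intro w
    rw [testBit_newg _ _ _ _ _ hne' h.bit_hole hbit, hori]
    split_ifs with h1 h2
    · have := idx_inj h1
      subst this
      constructor
      · intro ho
        exact ⟨i, hu, ho⟩
      · rintro ⟨j, hj', ho⟩
        rwa [C'.inj (hj'.trans hu.symm)] at ho
    · have := idx_inj h2
      subst this
      simp only [false_iff]
      rintro ⟨j, hj', ho⟩
      by_cases hji : j = i
      · subst hji; exact hne (hj'.symm.trans hu)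
      · rw [hj j hji, ← hv] at hj'
        exact hji (C.inj hj')
    · rw [h.bit]
      have hwu : w ≠ u := fun e => h1 (by rw [e])
      have hwv : w ≠ v := fun e => h2 (by rw [e])
      constructor
      · rintro ⟨j, hj', ho⟩
        have hji : j ≠ i := by
          rintro rfl
          exact hwv (hj'.symm.trans hv)
        exact ⟨j, (hj j hji).trans hj', ho⟩
      · rintro ⟨j, hj', ho⟩
        have hji : j ≠ i := by
          rintro rfl
          exact hwu (hj'.symm.trans hu)
        exact ⟨j, (hj j hji).symm.trans hj', ho⟩

theorem move_fwd {C C' : Conf} {u : Cell 4 4} {g : Nat} (h : Enc C u g) (hm : RHMove C C') :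
    ∃ v b, okMove (idx u, idx v, b) = true ∧ g.testBit (idx v) = b ∧
      Enc C' v (newg (idx u) (idx v) b g) := by
  obtain ⟨hori, i, hj, hemp, hadj⟩ := hm
  have hu : C'.pos i = u := by
    by_contra hne
    obtain ⟨j, hj'⟩ := occ h.hole _ hne
    exact hemp j hj'
  have := enc_of_move h hori rfl hu hj
  refine ⟨C.pos i, C.ori i, ?_, this⟩
  rw [okMove_iff, ← hu]
  exact hadj

theorem move_bwd {C : Conf} {u : Cell 4 4} {g : Nat} (h : Enc C u g) (v : Cell 4 4) (b : Bool)
    (hok : okMove (idx u, idx v, b) = true) (hb : g.testBit (idx v) = b) :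
    ∃ C', RHMove C C' ∧ Enc C' v (newg (idx u) (idx v) b g) := by
  have hne : v ≠ u := by
    rintro rfl
    exact okMove_ne _ _ _ hok rfl
  obtain ⟨i, hi⟩ := occ h.hole v hne
  have hinj : Function.Injective (Function.update C.pos i u) := by
    intro a c hac
    by_cases ha : a = i <;> by_cases hc : c = i
    · rw [ha, hc]
    · subst ha
      rw [Function.update_self, Function.update_of_ne hc] at hac
      exact absurd hac.symm (h.hole c)
    · subst hc
      rw [Function.update_self, Function.update_of_ne ha] at hac
      exact absurd hac (h.hole a)
    · rw [Function.update_of_ne hc, Function.update_of_ne ha] at hac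
      exact C.inj hac
  have hu : Function.update C.pos i u i = u := Function.update_self ..
  have hj : ∀ j, j ≠ i → Function.update C.pos i u j = C.pos j :=
    fun j hj => Function.update_of_ne hj ..
  have key := enc_of_move (C' := ⟨C.ori, Function.update C.pos i u, hinj⟩) h rfl hi hu hj
  have hbo : C.ori i = b := key.1.symm.trans hb
  rw [hbo] at key
  refine ⟨⟨C.ori, Function.update C.pos i u, hinj⟩, ⟨rfl, i, hj, ?_, ?_⟩, key.2⟩
  · intro j
    simp only [hu]
    exact h.hole j
  · have := (okMove_iff _ _ _).1 hok
    simp only [hu, hi, hbo]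
    exact this

/-- `t` is the leftmost horizontal car on row `r`. -/
def Left (r : Fin 4) (t : Fin 15) (C : Conf) : Prop :=
  C.ori t = true ∧ (C.pos t).1 = r ∧
      (∀ j, C.ori j = true → (C.pos j).1 = r → (C.pos t).2 ≤ (C.pos j).2)

theorem Left.move {r : Fin 4} {t : Fin 15} {C C' : Conf} (h : Left r t C) (hm : RHMove C C') :
    Left r t C' := by
  obtain ⟨h1, h2, h3⟩ := h
  obtain ⟨hori, i, hj, hemp, hadj⟩ := hm
  have hrow : ∀ j, C.ori j = true → (C'.pos j).1 = (C.pos j).1 := by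
    intro j hjo
    by_cases hji : j = i
    · subst hji
      rcases hadj with ⟨-, ha⟩ | ⟨ha, -⟩
      · exact ha.1.symm
      · rw [hjo] at ha; cases ha
    · rw [hj j hji]
  refine ⟨by rw [hori]; exact h1, by rw [hrow t h1]; exact h2, ?_⟩
  intro j hjo hjr
  rw [hori] at hjo
  by_cases hjt : j = t
  · rw [hjt]
  have hjr' : (C.pos j).1 = r := by rw [← hrow j hjo]; exact hjr
  have hle := h3 j hjo hjr'
  have hne : (C.pos t).2 ≠ (C.pos j).2 := fun e =>
    hjt (C.inj (Prod.ext (hjr'.trans h2.symm) e.symm))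
  by_cases hti : t = i
  · subst hti
    rw [hj j hjt]
    rcases hadj with ⟨-, -, ha⟩ | ⟨ha, -⟩
    · rw [Fin.le_def] at *
      rw [Ne, Fin.ext_iff] at hne
      omega
    · rw [h1] at ha; cases ha
  · rw [hj t hti]
    by_cases hji : j = i
    · subst hji
      rcases hadj with ⟨-, -, ha⟩ | ⟨ha, -⟩
      · rw [Fin.le_def] at *
        rw [Ne, Fin.ext_iff] at hne
        omega
      · rw [hjo] at ha; cases ha
    · rw [hj j hji]; exact hle

theorem Left.goal {r : Fin 4} {t : Fin 15} {C : Conf} (h : Left r t C) {u : Cell 4 4} {g : Nat}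
    (he : Enc C u g) : C.pos t = (r, 0) ↔ g.testBit (4 * r.val) = true := by
  have e : 4 * r.val = idx (r, 0) := by simp [idx]
  rw [e, he.bit]
  obtain ⟨h1, h2, h3⟩ := h
  constructor
  · intro ht
    exact ⟨t, ht, h1⟩
  · rintro ⟨j, hj, ho⟩
    have := h3 j ho (by rw [hj])
    rw [hj] at this
    exact Prod.ext h2 (Fin.le_zero_iff.1 this)

/-- `C` can be solved in exactly `N` moves. -/
def Sol (r : Fin 4) (t : Fin 15) : Nat → Conf → Prop
  | 0, C => C.pos t = (r, 0)
  | N + 1, C => ∃ C', RHMove C C' ∧ Sol r t N C'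

theorem sol_iff (r : Fin 4) (t : Fin 15) (N : Nat) (C : Conf) :
    (∃ f : ℕ → RHConfig 4 4 15, f 0 = C ∧
        (∀ i < N, RHMove (f i) (f (i + 1))) ∧
        (f N).pos t = (r, (0 : Fin 4))) ↔ Sol r t N C := by
  induction N generalizing C with
  | zero =>
    constructor
    · rintro ⟨f, rfl, -, h⟩
      exact h
    · intro h
      exact ⟨fun _ => C, rfl, fun i hi => absurd hi (by omega), h⟩
  | succ N ih =>
    constructor
    · rintro ⟨f, rfl, h1, h2⟩
      refine ⟨f 1, h1 0 (by omega), (ih _).1 ⟨fun n => f (n + 1), rfl, ?_, h2⟩⟩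
      intro i hi
      exact h1 (i + 1) (by omega)
    · rintro ⟨C', hm, hs⟩
      obtain ⟨f, rfl, h1, h2⟩ := (ih _).2 hs
      refine ⟨fun n => Nat.casesOn n C f, rfl, ?_, h2⟩
      intro i hi
      cases i with
      | zero => exact hm
      | succ i => exact h1 i (by omega)

theorem layer_zero (r p : Nat) (hp : p < 16) : (layer mm r 0).getD p 0 = start r := by
  rw [layer, List.getD_eq_getElem?_getD, List.getElem?_map, List.getElem?_range hp]
  rfl

theorem layer_succ (r n p : Nat) (hp : p < 16) :
    (layer mm r (n + 1)).getD p 0 = stepAt mm (layer mm r n) p := by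
  simp [layer, List.getD_eq_getElem?_getD, hp]

theorem layer_spec (r : Fin 4) (t : Fin 15) (n : Nat) {C : Conf} {u : Cell 4 4} {g : Nat}
    (hl : Left r t C) (he : Enc C u g) :
    ((layer mm r.val n).getD (idx u) 0).testBit g = true ↔ ∃ N ≤ n, Sol r t N C := by
  induction n generalizing C u g with
  | zero =>
    rw [layer_zero _ _ (idx_lt u), start_spec _ _ r.2 he.lt, ← hl.goal he]
    constructor
    · intro h
      exact ⟨0, le_refl _, h⟩
    · rintro ⟨N, hN, h⟩
      obtain rfl : N = 0 := by omega
      exact h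
  | succ n ih =>
    rw [layer_succ _ _ _ (idx_lt u), step_spec _ _ _ (idx_lt u) he.lt he.bit_hole, ih hl he]
    constructor
    · rintro (⟨N, hN, h⟩ | ⟨q, b, hq, hok, hb, hx⟩)
      · exact ⟨N, by omega, h⟩
      · obtain ⟨v, rfl⟩ := idx_surj q hq
        obtain ⟨C', hm, he'⟩ := move_bwd he v b hok hb
        obtain ⟨N, hN, h⟩ := (ih (hl.move hm) he').1 hx
        exact ⟨N + 1, by omega, C', hm, h⟩
    · rintro ⟨N, hN, h⟩
      cases N with
      | zero => exact Or.inl ⟨0, by omega, h⟩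
      | succ N =>
        obtain ⟨C', hm, hs⟩ := h
        obtain ⟨v, b, hok, hb, he'⟩ := move_fwd he hm
        exact Or.inr ⟨idx v, b, idx_lt v, hok, hb,
          (ih (hl.move hm) he').2 ⟨N, by omega, hs⟩⟩

theorem layer_const (r : Fin 4) (n : Nat) : layer mm r.val (40 + n) = layer mm r.val 40 := by
  induction n with
  | zero => rfl
  | succ n ih => rw [← Nat.add_assoc, layer, ih, ← layer, layer_stop _ r.2]

theorem sol_le (r : Fin 4) (t : Fin 15) {C : Conf} (hl : Left r t C) (d : Nat)
    (h : Sol r t d C) : ∃ N ≤ 40, Sol r t N C := by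
  obtain ⟨u, g, he⟩ := exists_enc C
  rw [← layer_spec r t 40 hl he, ← layer_const r d, layer_spec r t _ hl he]
  exact ⟨d, by omega, h⟩

/-- The hardest configuration: car `i` sits at cell `i` (or `i + 1` from the hole `10` on). -/
def hardPos (i : Fin 15) : Cell 4 4 :=
  let q := if i.val < 10 then i.val else i.val + 1
  (⟨q / 4 % 4, Nat.mod_lt _ (by omega)⟩, ⟨q % 4, Nat.mod_lt _ (by omega)⟩)

def hard : Conf where
  ori i := Nat.testBit 49447 (idx (hardPos i))
  pos := hardPos
  inj := by decide +kernel

theorem hard_enc : Enc hard (2, 2) 49447 where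
  hole := by
    change ∀ j, hardPos j ≠ (2, 2)
    decide +kernel
  lt := by norm_num
  bit := by
    change ∀ v, Nat.testBit 49447 (idx v) = true ↔
      ∃ j, hardPos j = v ∧ Nat.testBit 49447 (idx (hardPos j)) = true
    decide +kernel

theorem hard_left : Left 1 5 hard := by
  change Nat.testBit 49447 (idx (hardPos 5)) = true ∧ (hardPos 5).1 = 1 ∧
    (∀ j, Nat.testBit 49447 (idx (hardPos j)) = true → (hardPos j).1 = 1 →
      (hardPos 5).2 ≤ (hardPos j).2)
  decide +kernel

theorem hard_far (N : Nat) (h : Sol 1 5 N hard) : 40 ≤ N := by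
  by_contra hN
  have := (layer_spec 1 5 39 hard_left hard_enc).2 ⟨N, by omega, h⟩
  exact Bool.false_ne_true (far.symm.trans this)

theorem hard_near : Sol 1 5 40 hard := by
  obtain ⟨N, hN, h⟩ := (layer_spec 1 5 40 hard_left hard_enc).1 near
  have := hard_far N h
  obtain rfl : N = 40 := by omega
  exact h

end RH

/-- over all 4×4 Unit Rush Hour configurations with exactly one
empty cell (hence exactly 15 cars), any exit row `r` containing at least one
horizontal car, with target `t` the leftmost horizontal car on row `r`, that
are solvable, the maximum of the minimal number of legal moves needed to bring
the target car to cell `(r,0)` is exactly 40. -/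
theorem stmt_10 :
    IsGreatest {d : ℕ | ∃ (C : RHConfig 4 4 15) (r : Fin 4) (t : Fin 15),
      C.ori t = true ∧ (C.pos t).1 = r ∧
      (∀ j, C.ori j = true → (C.pos j).1 = r → (C.pos t).2 ≤ (C.pos j).2) ∧
      IsLeast {N : ℕ | ∃ f : ℕ → RHConfig 4 4 15, f 0 = C ∧
        (∀ i < N, RHMove (f i) (f (i + 1))) ∧
        (f N).pos t = (r, (0 : Fin 4))} d} 40 := by
  constructor
  · refine ⟨RH.hard, 1, 5, RH.hard_left.1, RH.hard_left.2.1, RH.hard_left.2.2, ?_, ?_⟩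
    · exact (RH.sol_iff _ _ _ _).2 RH.hard_near
    · intro N hN
      exact RH.hard_far N ((RH.sol_iff _ _ _ _).1 hN)
  · rintro d ⟨C, r, t, h1, h2, h3, hd, hmin⟩
    obtain ⟨N, hN, hs⟩ := RH.sol_le r t ⟨h1, h2, h3⟩ d ((RH.sol_iff _ _ _ _).1 hd)
    exact le_trans (hmin ((RH.sol_iff _ _ _ _).2 hs)) hN
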